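/- Let G be a finite non-cyclic group of order n with |Cyc(G)| = 1. Then the complement graph Γ̄_G is isomorphic to K₃ ∪ (n-4)K₁ — that is, there exist three distinct vertices a, b, c of Γ̄_G that are pairwise adjacent in Γ̄_G, every vertex other than a, b, c is isolated in Γ̄_G, and these are the only edges of Γ̄_G — if and only if n = 8 and G is isomorphic to the dihedral group of order 8. -/

import Mathlib

/-- The cyclicizer of a group `G`: the set of `y` such that `⟨x, y⟩` is cyclic
for every `x ∈ G`. -/
def cyclicizer (G : Type*) [Group G] : Set G :=
  {y | ∀ x : G, IsCyclic (Subgroup.closure ({x, y} : Set G))}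

/-!
Suppose that the only edges of the complement graph are those of a triangle `a`, `b`, `c`. A
nontrivial element `z` of the cyclicizer would join every vertex `v` to `v * z`, so `a`, `b`, `c`
would be all the vertices, and then `a` would lie in the cyclicizer. So the vertices are the
nontrivial elements. A cyclic subgroup containing `a` contains no nontrivial element besides `a`,
`b`, `c`, which makes `{1, a, b, c}` itself a cyclic subgroup. An element `v` outside of it is not
adjacent to `v⁻¹`, hence `v⁻¹ = v`, and a group whose elements outside a cyclic subgroup of order
greater than two all square to `1` is cyclic or dihedral.
-/

open Subgroup DihedralGroup

section Dihedral

variable {G : Type*} [Group G] {a x : G} {n : ℕ}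

theorem zpow_cast_intCast_zmod (ha : a ^ n = 1) (k : ℤ) : a ^ ((k : ZMod n).cast : ℤ) = a ^ k := by
  rw [ZMod.coe_intCast]
  exact (zpow_eq_zpow_emod k (by rwa [zpow_natCast])).symm

theorem zpow_mul_eq_mul_zpow_neg (hx : x * x = 1) (hxa : x * a * x = a⁻¹) (k : ℤ) :
    a ^ k * x = x * a ^ (-k) := by
  have hconj : SemiconjBy x a⁻¹ a := by
    rw [SemiconjBy, ← hxa, ← mul_assoc, ← mul_assoc, hx, one_mul]
  rw [zpow_neg, ← inv_zpow]
  exact (hconj.zpow_right k).symm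

/-- The homomorphism from the dihedral group given by its universal property: the rotation `r 1`
goes to `a` and the reflection `sr 0` to `x`. -/
def dihedralLift (ha : a ^ n = 1) (hx : x * x = 1) (hxa : x * a * x = a⁻¹) :
    DihedralGroup n →* G :=
  MonoidHom.mk'
    (fun
      | r i => a ^ (i.cast : ℤ)
      | sr i => x * a ^ (i.cast : ℤ)) <| by
    have hcomm := zpow_mul_eq_mul_zpow_neg hx hxa
    rintro (i | i) (j | j) <;>
      obtain ⟨k, rfl⟩ := ZMod.intCast_surjective i <;>
      obtain ⟨l, rfl⟩ := ZMod.intCast_surjective j <;>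
      simp only [r_mul_r, r_mul_sr, sr_mul_r, sr_mul_sr, ← Int.cast_add, ← Int.cast_sub,
        zpow_cast_intCast_zmod ha]
    · rw [zpow_add]
    · rw [← mul_assoc, hcomm, mul_assoc, ← zpow_add, neg_add_eq_sub]
    · rw [zpow_add, mul_assoc]
    · rw [mul_assoc, ← mul_assoc (a ^ k), hcomm, mul_assoc, ← mul_assoc, hx, one_mul, ← zpow_add,
        neg_add_eq_sub]

section

variable (ha : a ^ n = 1) (hx : x * x = 1) (hxa : x * a * x = a⁻¹)

theorem dihedralLift_r_intCast (k : ℤ) : dihedralLift ha hx hxa (r k) = a ^ k :=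
  zpow_cast_intCast_zmod ha k

theorem dihedralLift_sr_intCast (k : ℤ) : dihedralLift ha hx hxa (sr k) = x * a ^ k :=
  congrArg (x * ·) (zpow_cast_intCast_zmod ha k)

theorem dihedralLift_injective (hn : orderOf a = n) (hmem : x ∉ zpowers a) :
    Function.Injective (dihedralLift ha hx hxa) := by
  rw [injective_iff_map_eq_one]
  rintro (i | i) h <;> obtain ⟨k, rfl⟩ := ZMod.intCast_surjective i
  · rw [dihedralLift_r_intCast, ← orderOf_dvd_iff_zpow_eq_one, hn] at h
    rw [(ZMod.intCast_zmod_eq_zero_iff_dvd k n).2 h, r_zero]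
  · rw [dihedralLift_sr_intCast] at h
    exact absurd (eq_inv_of_mul_eq_one_left h ▸ inv_mem (zpow_mem_zpowers a k)) hmem

theorem dihedralLift_surjective (hindex : (zpowers a).index = 2) (hmem : x ∉ zpowers a) :
    Function.Surjective (dihedralLift ha hx hxa) := by
  intro g
  by_cases hg : g ∈ zpowers a
  · obtain ⟨k, rfl⟩ := hg
    exact ⟨r k, dihedralLift_r_intCast ha hx hxa k⟩
  · obtain ⟨k, hk : a ^ k = x * g⟩ := (mul_mem_iff_of_index_two hindex).2 (iff_of_false hmem hg)
    refine ⟨sr k, ?_⟩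
    rw [dihedralLift_sr_intCast, hk, ← mul_assoc, hx, one_mul]

end

section OutsideInvolutions

variable {H : Subgroup G} (hH : ∀ v ∉ H, v * v = 1)
include hH

theorem mul_mul_eq_inv_of_notMem (hx : x ∉ H) (ha : a ∈ H) : x * a * x = a⁻¹ :=
  eq_inv_of_mul_eq_one_left <| by
    rw [mul_assoc]
    exact hH (x * a) (by rwa [mul_mem_cancel_right ha])

theorem index_eq_two_of_notMem_mul_self_eq_one (ha : a ∈ H) (ha2 : a * a ≠ 1) (hx : x ∉ H) :
    H.index = 2 := by
  refine index_eq_two_iff_exists_notMem_and'.2 ⟨x, hx, fun y => ?_⟩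
  by_contra! ⟨hxy, hy⟩
  have hinv : x * y = y * x := by
    rw [← inv_eq_of_mul_eq_one_left (hH _ hxy), mul_inv_rev, inv_eq_of_mul_eq_one_left (hH x hx),
      inv_eq_of_mul_eq_one_left (hH y hy)]
  -- `x` and `y` both invert `a`, so their product centralizes it, yet it inverts `a` as well.
  have hself : a⁻¹ = a :=
    calc a⁻¹ = x * y * a * (x * y) := (mul_mul_eq_inv_of_notMem hH hxy ha).symm
      _ = x * (y * a * y) * x := by nth_rewrite 2 [hinv]; group
      _ = x * a⁻¹ * x := by rw [mul_mul_eq_inv_of_notMem hH hy ha]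
      _ = a := by rw [mul_mul_eq_inv_of_notMem hH hx (inv_mem ha), inv_inv]
  exact ha2 (inv_eq_iff_mul_eq_one.1 hself)

end OutsideInvolutions

theorem nonempty_mulEquiv_dihedralGroup_orderOf (ha2 : a * a ≠ 1) (hx : x ∉ zpowers a)
    (hout : ∀ v ∉ zpowers a, v * v = 1) : Nonempty (G ≃* DihedralGroup (orderOf a)) := by
  have ha := mem_zpowers a
  have hxa := mul_mul_eq_inv_of_notMem hout hx ha
  have hindex := index_eq_two_of_notMem_mul_self_eq_one hout ha ha2 hx
  have hpow := pow_orderOf_eq_one a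
  exact ⟨(MulEquiv.ofBijective (dihedralLift hpow (hout x hx) hxa)
    ⟨dihedralLift_injective hpow _ hxa rfl hx, dihedralLift_surjective hpow _ hxa hindex hx⟩).symm⟩

end Dihedral

/-- The elements `x` and `y` generate a cyclic subgroup; for distinct vertices this is adjacency in
the complement of the non-cyclic graph. -/
def CyclicPair {G : Type*} [Group G] (x y : G) : Prop :=
  IsCyclic (closure ({x, y} : Set G))

theorem mem_zpowers_iff_of_mul_self_eq_one {G : Type*} [Group G] {x y : G} (hx : x * x = 1) :
    y ∈ zpowers x ↔ y = 1 ∨ y = x := by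
  constructor
  · rintro ⟨k, rfl⟩
    have hx2 : x ^ (2 : ℤ) = 1 := by rwa [zpow_two]
    obtain ⟨m, rfl | rfl⟩ := Int.even_or_odd' k
    · left
      simp only [zpow_mul, hx2, one_zpow]
    · right
      simp only [zpow_add_one, zpow_mul, hx2, one_zpow, one_mul]
  · rintro (rfl | rfl)
    exacts [one_mem _, mem_zpowers _]

section CyclicPair

variable {G H : Type*} [Group G] [Group H] {x y z : G}

theorem cyclicPair_iff_exists_mem_zpowers :
    CyclicPair x y ↔ ∃ g, x ∈ zpowers g ∧ y ∈ zpowers g := by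
  constructor
  · intro h
    obtain ⟨g, hg⟩ := (Subgroup.isCyclic_iff_exists_zpowers_eq_top _).1 h
    exact ⟨g, Set.pair_subset_iff.1 (hg ▸ subset_closure)⟩
  · rintro ⟨g, hx, hy⟩
    have hle : closure {x, y} ≤ zpowers g := (closure_le _).2 (Set.pair_subset hx hy)
    exact isCyclic_of_injective (inclusion hle) (inclusion_injective hle)

theorem CyclicPair.symm (h : CyclicPair x y) : CyclicPair y x := by
  rwa [CyclicPair, Set.pair_comm]

theorem cyclicPair_of_mem_zpowers (h : y ∈ zpowers x) : CyclicPair x y :=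
  cyclicPair_iff_exists_mem_zpowers.2 ⟨x, mem_zpowers x, h⟩

theorem CyclicPair.map (f : G →* H) (h : CyclicPair x y) : CyclicPair (f x) (f y) := by
  obtain ⟨g, ⟨i, rfl⟩, ⟨j, rfl⟩⟩ := cyclicPair_iff_exists_mem_zpowers.1 h
  exact cyclicPair_iff_exists_mem_zpowers.2
    ⟨f g, ⟨i, (map_zpow f g i).symm⟩, ⟨j, (map_zpow f g j).symm⟩⟩

theorem cyclicPair_map_iff (e : G ≃* H) : CyclicPair (e x) (e y) ↔ CyclicPair x y :=
  ⟨fun h => by simpa using h.map e.symm.toMonoidHom, CyclicPair.map e.toMonoidHom⟩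

theorem map_mem_cyclicizer_iff (e : G ≃* H) : e y ∈ cyclicizer H ↔ y ∈ cyclicizer G :=
  e.surjective.forall.trans (forall_congr' fun _ => cyclicPair_map_iff e)

theorem mul_mem_cyclicizer (hy : y ∈ cyclicizer G) (hz : z ∈ cyclicizer G) :
    y * z ∈ cyclicizer G := by
  intro x
  obtain ⟨g, hxg, hyg⟩ := cyclicPair_iff_exists_mem_zpowers.1 (hy x)
  obtain ⟨k, hgk, hzk⟩ := cyclicPair_iff_exists_mem_zpowers.1 (hz g)
  have hle : zpowers g ≤ zpowers k := zpowers_le.2 hgk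
  exact cyclicPair_iff_exists_mem_zpowers.2 ⟨k, hle hxg, mul_mem (hle hyg) hzk⟩

theorem mem_cyclicizer_of_mem_zpowers (hy : y ∈ cyclicizer G) (hz : z ∈ zpowers y) :
    z ∈ cyclicizer G := by
  intro x
  obtain ⟨g, hxg, hyg⟩ := cyclicPair_iff_exists_mem_zpowers.1 (hy x)
  exact cyclicPair_iff_exists_mem_zpowers.2 ⟨g, hxg, zpowers_le.2 hyg hz⟩

theorem one_mem_cyclicizer : (1 : G) ∈ cyclicizer G :=
  fun x => cyclicPair_of_mem_zpowers (one_mem (zpowers x))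

/-- The cyclicizer as a subgroup. -/
def cyclicizerSubgroup (G : Type*) [Group G] : Subgroup G where
  carrier := cyclicizer G
  mul_mem' := mul_mem_cyclicizer
  one_mem' := one_mem_cyclicizer
  inv_mem' hy := mem_cyclicizer_of_mem_zpowers hy (inv_mem (mem_zpowers _))

theorem mul_mem_cyclicizer_iff (hz : z ∈ cyclicizer G) :
    y * z ∈ cyclicizer G ↔ y ∈ cyclicizer G :=
  mul_mem_cancel_right (H := cyclicizerSubgroup G) hz

theorem cyclicPair_mul_of_mem_cyclicizer (hz : z ∈ cyclicizer G) (y : G) :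
    CyclicPair y (y * z) := by
  obtain ⟨g, hyg, hzg⟩ := cyclicPair_iff_exists_mem_zpowers.1 (hz y)
  exact cyclicPair_iff_exists_mem_zpowers.2 ⟨g, hyg, mul_mem hyg hzg⟩

end CyclicPair

/-- The complement of the non-cyclic graph is the disjoint union of the triangle on `a`, `b`, `c`
and isolated vertices, stated on elements of `G` rather than on a subtype of vertices. -/
def IsComplTriangle {G : Type*} [Group G] (a b c : G) : Prop :=
  a ∉ cyclicizer G ∧ b ∉ cyclicizer G ∧ c ∉ cyclicizer G ∧
    a ≠ b ∧ a ≠ c ∧ b ≠ c ∧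
    CyclicPair a b ∧ CyclicPair a c ∧ CyclicPair b c ∧
    ∀ v : G, v ∉ cyclicizer G → v ≠ a → v ≠ b → v ≠ c →
      ∀ w : G, w ∉ cyclicizer G → w ≠ v → ¬ CyclicPair v w

namespace IsComplTriangle

variable {G H : Type*} [Group G] [Group H] {a b c g u v w : G}

theorem map (e : G ≃* H) (h : IsComplTriangle a b c) : IsComplTriangle (e a) (e b) (e c) := by
  simpa only [IsComplTriangle, e.surjective.forall, map_mem_cyclicizer_iff, cyclicPair_map_iff,
    e.injective.ne_iff] using h

theorem mem_of_cyclicPair (h : IsComplTriangle a b c) (hv : v ∉ cyclicizer G)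
    (hw : w ∉ cyclicizer G) (hne : w ≠ v) (hvw : CyclicPair v w) : v ∈ ({a, b, c} : Set G) := by
  obtain ⟨-, -, -, -, -, -, -, -, -, isolated⟩ := h
  by_contra! hmem
  simp only [Set.mem_insert_iff, Set.mem_singleton_iff, not_or] at hmem
  exact isolated v hv hmem.1 hmem.2.1 hmem.2.2 w hw hne hvw

theorem cyclicPair_of_mem (h : IsComplTriangle a b c) (hu : u ∈ ({a, b, c} : Set G))
    (hv : v ∈ ({a, b, c} : Set G)) : CyclicPair u v := by
  obtain ⟨-, -, -, -, -, -, hab, hac, hbc, -⟩ := h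
  have refl (x : G) : CyclicPair x x := cyclicPair_of_mem_zpowers (mem_zpowers x)
  rcases hu with rfl | rfl | rfl <;> rcases hv with rfl | rfl | rfl
  exacts [refl _, hab, hac, hab.symm, refl _, hbc, hac.symm, hbc.symm, refl _]

theorem cyclicizer_eq (h : IsComplTriangle a b c) : cyclicizer G = {1} := by
  refine Set.eq_singleton_iff_unique_mem.2 ⟨one_mem_cyclicizer, fun z hz => ?_⟩
  by_contra hz1
  have vertex_mem (v : G) (hv : v ∉ cyclicizer G) : v ∈ ({a, b, c} : Set G) :=
    h.mem_of_cyclicPair hv (mt (mul_mem_cyclicizer_iff hz).1 hv) (mt mul_eq_left.1 hz1)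
      (cyclicPair_mul_of_mem_cyclicizer hz v)
  refine h.1 fun x => ?_
  by_cases hx : x ∈ cyclicizer G
  · exact CyclicPair.symm (hx a)
  · exact h.cyclicPair_of_mem (vertex_mem x hx) (Set.mem_insert a _)

theorem notMem_cyclicizer_iff (h : IsComplTriangle a b c) : v ∉ cyclicizer G ↔ v ≠ 1 := by
  rw [h.cyclicizer_eq, Set.mem_singleton_iff]

theorem zpowers_subset (h : IsComplTriangle a b c) (ha : a ∈ zpowers g) :
    (zpowers g : Set G) ⊆ {1, a, b, c} := by
  intro v hv
  by_cases hva : v = a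
  · exact Or.inr (Or.inl hva)
  by_cases hv1 : v = 1
  · exact Or.inl hv1
  exact Or.inr <| h.mem_of_cyclicPair (h.notMem_cyclicizer_iff.2 hv1) h.1
    (Ne.symm hva) (cyclicPair_iff_exists_mem_zpowers.2 ⟨g, hv, ha⟩)

theorem exists_zpowers_eq (h : IsComplTriangle a b c) :
    ∃ g : G, (zpowers g : Set G) = {1, a, b, c} := by
  have ⟨ha, _, _, _, _, _, hab, _⟩ := h
  obtain ⟨k, hak, hbk⟩ := cyclicPair_iff_exists_mem_zpowers.1 hab
  have hk : k ∈ ({a, b, c} : Set G) := by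
    refine (h.zpowers_subset hak (mem_zpowers k)).resolve_left ?_
    rintro rfl
    exact ha (mem_cyclicizer_of_mem_zpowers one_mem_cyclicizer hak)
  obtain ⟨g, hkg, hcg⟩ := cyclicPair_iff_exists_mem_zpowers.1 <|
    h.cyclicPair_of_mem hk (v := c) (by simp)
  have hle : zpowers k ≤ zpowers g := zpowers_le.2 hkg
  refine ⟨g, (h.zpowers_subset (hle hak)).antisymm ?_⟩
  rintro v (rfl | rfl | rfl | rfl)
  exacts [one_mem _, hle hak, hle hbk, hcg]

theorem orderOf_eq_four (h : IsComplTriangle a b c) (hg : (zpowers g : Set G) = {1, a, b, c}) :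
    orderOf g = 4 := by
  have ⟨ha, hb, hc, hab, hac, hbc, _⟩ := h
  rw [h.notMem_cyclicizer_iff] at ha hb hc
  rw [← Nat.card_zpowers, ← SetLike.coe_sort_coe, Nat.card_coe_set_eq, hg]
  exact Set.ncard_eq_four.2
    ⟨1, a, b, c, ha.symm, hb.symm, hc.symm, hab, hac, hbc, rfl⟩

theorem mul_self_eq_one_of_notMem (h : IsComplTriangle a b c) (hv : v ∉ ({1, a, b, c} : Set G)) :
    v * v = 1 := by
  have hv1 : v ≠ 1 := fun hv1 => hv (Or.inl hv1)
  by_contra hvv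
  refine hv (Or.inr (h.mem_of_cyclicPair (w := v⁻¹) ?_ ?_ ?_ ?_))
  · exact h.notMem_cyclicizer_iff.2 hv1
  · exact h.notMem_cyclicizer_iff.2 (inv_ne_one.2 hv1)
  · exact mt inv_eq_iff_mul_eq_one.1 hvv
  · exact cyclicPair_of_mem_zpowers (inv_mem (mem_zpowers v))

theorem nonempty_mulEquiv_dihedralGroup (h : IsComplTriangle a b c) :
    Nonempty (G ≃* DihedralGroup 4) := by
  obtain ⟨g, hg⟩ := h.exists_zpowers_eq
  have horder := h.orderOf_eq_four hg
  have hg2 : g * g ≠ 1 := by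
    rw [← pow_two]
    exact pow_ne_one_of_lt_orderOf two_ne_zero (by omega)
  obtain ⟨x, hx⟩ : ∃ x, x ∉ zpowers g := by
    by_contra! hgen
    exact h.1 fun x => cyclicPair_iff_exists_mem_zpowers.2 ⟨g, hgen x, hgen a⟩
  rw [← horder]
  refine nonempty_mulEquiv_dihedralGroup_orderOf hg2 hx fun v hv => ?_
  exact h.mul_self_eq_one_of_notMem (hg ▸ hv)

end IsComplTriangle

section DihedralGroup

variable {n : ℕ}

theorem r_mem_zpowers_r_one (i : ZMod n) : r i ∈ zpowers (r 1 : DihedralGroup n) := by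
  obtain ⟨k, rfl⟩ := ZMod.intCast_surjective i
  exact ⟨k, r_one_zpow k⟩

theorem cyclicPair_r_r (i j : ZMod n) : CyclicPair (r i) (r j) :=
  cyclicPair_iff_exists_mem_zpowers.2 ⟨r 1, r_mem_zpowers_r_one i, r_mem_zpowers_r_one j⟩

theorem cyclicPair_sr_iff {i : ZMod n} {w : DihedralGroup n} :
    CyclicPair (sr i) w ↔ w = 1 ∨ w = sr i := by
  rw [← mem_zpowers_iff_of_mul_self_eq_one (sr_mul_self i)]
  refine ⟨fun h => ?_, cyclicPair_of_mem_zpowers⟩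
  obtain ⟨j | j, hi, hw⟩ := cyclicPair_iff_exists_mem_zpowers.1 h
  · obtain ⟨k, hk⟩ := hi
    simp only [r_zpow, reduceCtorEq] at hk
  · obtain hi | hi := (mem_zpowers_iff_of_mul_self_eq_one (sr_mul_self j)).1 hi
    · cases hi
    · rwa [hi]

theorem r_mem_cyclicizer_iff {i : ZMod n} : r i ∈ cyclicizer (DihedralGroup n) ↔ i = 0 := by
  constructor
  · intro h
    obtain hr | hr := cyclicPair_sr_iff.1 (h (sr 0))
    · exact r.inj hr
    · cases hr
  · rintro rfl
    exact one_mem_cyclicizer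

theorem isComplTriangle_dihedralGroup_four :
    IsComplTriangle (r 1 : DihedralGroup 4) (r 2) (r 3) := by
  simp only [IsComplTriangle, r_mem_cyclicizer_iff, cyclicPair_r_r, true_and, ne_eq, r.injEq]
  refine ⟨by decide, by decide, by decide, by decide, by decide, by decide, ?_⟩
  rintro (i | i) hv h1 h2 h3 w hw hne hvw
  · rw [r_mem_cyclicizer_iff] at hv
    have eq_three : ∀ i : ZMod 4, i ≠ 0 → i ≠ 1 → i ≠ 2 → i = 3 := by decide
    exact h3 (congrArg r (eq_three i hv (mt (congrArg r) h1) (mt (congrArg r) h2)))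
  · obtain rfl | rfl := cyclicPair_sr_iff.1 hvw
    exacts [hw one_mem_cyclicizer, hne rfl]

end DihedralGroup

theorem compl_eq_K3_union_isolated_iff_D8_general (G : Type*) [Group G] :
    (∃ a b c : G, IsComplTriangle a b c) ↔ Nonempty (G ≃* DihedralGroup 4) :=
  ⟨fun ⟨_, _, _, h⟩ => h.nonempty_mulEquiv_dihedralGroup,
    fun ⟨e⟩ => ⟨_, _, _, isComplTriangle_dihedralGroup_four.map e.symm⟩⟩

theorem compl_eq_K3_union_isolated_iff_D8 (G : Type*) [Group G] [Finite G]
    (hG : ¬ IsCyclic G) (n : ℕ) (hn : n = Nat.card G)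
    (hc : Nat.card (cyclicizer G) = 1) :
    (∃ a b c : G, a ∉ cyclicizer G ∧ b ∉ cyclicizer G ∧ c ∉ cyclicizer G ∧
        a ≠ b ∧ a ≠ c ∧ b ≠ c ∧
        IsCyclic (Subgroup.closure ({a, b} : Set G)) ∧
        IsCyclic (Subgroup.closure ({a, c} : Set G)) ∧
        IsCyclic (Subgroup.closure ({b, c} : Set G)) ∧
        ∀ v : G, v ∉ cyclicizer G → v ≠ a → v ≠ b → v ≠ c →
          ∀ w : G, w ∉ cyclicizer G → w ≠ v →
            ¬ IsCyclic (Subgroup.closure ({v, w} : Set G))) ↔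
      (n = 8 ∧ Nonempty (G ≃* DihedralGroup 4)) := by
  refine (compl_eq_K3_union_isolated_iff_D8_general G).trans
    ⟨fun ⟨e⟩ => ⟨?_, ⟨e⟩⟩, And.right⟩
  rw [hn, Nat.card_congr e.toEquiv, DihedralGroup.nat_card]
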